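/- If r is a reification from H to H' and L ⊆ SP(Σ), then r(cl_H(L)) ⊆ cl_{H'}(r(L)). -/

import Mathlib

namespace CKAH

open Classical

/-! ### Labelled posets and pomsets -/

/-- A labelled poset over alphabet `A`: a finite carrier with a partial order and labelling. -/
structure LPoset (A : Type) : Type 1 where
  carrier : Type
  [fin : Fintype carrier]
  [ord : PartialOrder carrier]
  lab : carrier → A

attribute [instance] LPoset.fin LPoset.ord

/-- Isomorphism of labelled posets: an order isomorphism preserving labels. -/
def LPoset.Iso {A : Type} (u v : LPoset A) : Prop :=
  ∃ e : u.carrier ≃o v.carrier, ∀ x, v.lab (e x) = u.lab x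

theorem LPoset.iso_equivalence (A : Type) : Equivalence (LPoset.Iso (A := A)) where
  refl u := ⟨OrderIso.refl _, fun _ => rfl⟩
  symm := by
    rintro u v ⟨e, he⟩
    exact ⟨e.symm, fun x => by rw [← he (e.symm x), OrderIso.apply_symm_apply]⟩
  trans := by
    rintro u v w ⟨e, he⟩ ⟨f, hf⟩
    exact ⟨e.trans f, fun x => by rw [OrderIso.trans_apply, hf, he]⟩

instance pomSetoid (A : Type) : Setoid (LPoset A) := ⟨LPoset.Iso, LPoset.iso_equivalence A⟩

/-- A pomset is an isomorphism class of labelled posets. -/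
def Pomset (A : Type) : Type 1 := Quotient (pomSetoid A)

/-- Sequential composition of labelled posets: disjoint union, everything on the left
below everything on the right (lexicographic sum order). -/
def LPoset.seqL {A : Type} (u v : LPoset A) : LPoset A where
  carrier := u.carrier ⊕ₗ v.carrier
  fin := inferInstanceAs (Fintype (u.carrier ⊕ v.carrier))
  lab := fun x => Sum.elim u.lab v.lab (ofLex x)

/-- Parallel composition of labelled posets: disjoint union with no cross ordering. -/
def LPoset.parL {A : Type} (u v : LPoset A) : LPoset A where
  carrier := u.carrier ⊕ v.carrier
  lab := Sum.elim u.lab v.lab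

def Pomset.seq {A : Type} : Pomset A → Pomset A → Pomset A :=
  Quotient.map₂ LPoset.seqL (by
    rintro u₁ u₂ ⟨e, he⟩ v₁ v₂ ⟨f, hf⟩
    refine ⟨(RelIso.sumLexCongr e f :
      (u₁.carrier ⊕ₗ v₁.carrier) ≃o (u₂.carrier ⊕ₗ v₂.carrier)), ?_⟩
    rintro (x | x)
    · exact he x
    · exact hf x)

/-- Order isomorphism between disjoint-union orders, from component isomorphisms. -/
def sumOrderIso {α β γ δ : Type} [PartialOrder α] [PartialOrder β] [PartialOrder γ]
    [PartialOrder δ] (e : α ≃o γ) (f : β ≃o δ) : (α ⊕ β) ≃o (γ ⊕ δ) where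
  toEquiv := Equiv.sumCongr e.toEquiv f.toEquiv
  map_rel_iff' := by
    rintro (x | x) (y | y) <;> simp [Sum.le_def, e.le_iff_le, f.le_iff_le]

def Pomset.par {A : Type} : Pomset A → Pomset A → Pomset A :=
  Quotient.map₂ LPoset.parL (by
    rintro u₁ u₂ ⟨e, he⟩ v₁ v₂ ⟨f, hf⟩
    refine ⟨sumOrderIso e f, ?_⟩
    rintro (x | x)
    · exact he x
    · exact hf x)

def LPoset.emptyL (A : Type) : LPoset A := { carrier := Fin 0, lab := fun x => x.elim0 }

def LPoset.singleL {A : Type} (a : A) : LPoset A := { carrier := PUnit, lab := fun _ => a }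

/-- The empty pomset `1`. -/
def Pomset.empty (A : Type) : Pomset A := ⟦LPoset.emptyL A⟧

/-- The single-letter pomset. -/
def Pomset.single {A : Type} (a : A) : Pomset A := ⟦LPoset.singleL a⟧

/-- Subsumption on labelled posets: `u ⊑ v` iff there is a label-preserving
order-preserving bijection from the carrier of `v` to that of `u`. -/
def LPoset.subL {A : Type} (u v : LPoset A) : Prop :=
  ∃ h : v.carrier ≃ u.carrier,
    (∀ x, u.lab (h x) = v.lab x) ∧ ∀ x y : v.carrier, x ≤ y → h x ≤ h y

/-- Subsumption of pomsets: `Pomset.sub U V` means `U ⊑ V`. -/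
def Pomset.sub {A : Type} : Pomset A → Pomset A → Prop :=
  Quotient.lift₂ LPoset.subL (by
    rintro u₁ v₁ u₂ v₂ ⟨e, he⟩ ⟨f, hf⟩
    refine propext ⟨?_, ?_⟩
    · rintro ⟨h, hl, hm⟩
      refine ⟨(f.toEquiv.symm.trans h).trans e.toEquiv, fun x => ?_, fun x y hxy => ?_⟩
      · show u₂.lab (e (h (f.symm x))) = v₂.lab x
        rw [he, hl, ← hf (f.symm x), OrderIso.apply_symm_apply]
      · simp only [Equiv.trans_apply]
        exact e.le_iff_le.mpr (hm _ _ (f.symm.le_iff_le.mpr hxy))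
    · rintro ⟨h, hl, hm⟩
      refine ⟨(f.toEquiv.trans h).trans e.toEquiv.symm, fun x => ?_, fun x y hxy => ?_⟩
      · show u₁.lab (e.symm (h (f x))) = v₁.lab x
        rw [← he (e.symm (h (f x))), OrderIso.apply_symm_apply, hl, hf]
      · simp only [Equiv.trans_apply]
        exact e.symm.le_iff_le.mpr (hm _ _ (f.le_iff_le.mpr hxy)))

def LPoset.isWordL {A : Type} (u : LPoset A) : Prop := ∀ x y : u.carrier, x ≤ y ∨ y ≤ x

/-- A pomset is a word when it is totally ordered. -/
def Pomset.IsWord {A : Type} : Pomset A → Prop :=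
  Quotient.lift LPoset.isWordL (by
    rintro u v ⟨e, -⟩
    refine propext ⟨fun h x y => ?_, fun h x y => ?_⟩
    · rcases h (e.symm x) (e.symm y) with h' | h'
      · exact Or.inl (e.symm.le_iff_le.mp h')
      · exact Or.inr (e.symm.le_iff_le.mp h')
    · rcases h (e x) (e y) with h' | h'
      · exact Or.inl (e.le_iff_le.mp h')
      · exact Or.inr (e.le_iff_le.mp h'))

def LPoset.mapL {A B : Type} (f : A → B) (u : LPoset A) : LPoset B :=
  { carrier := u.carrier, lab := f ∘ u.lab }

/-- Relabelling of pomsets along a function on letters. -/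
def Pomset.map {A B : Type} (f : A → B) : Pomset A → Pomset B :=
  Quotient.map (LPoset.mapL f)
    (by rintro u v ⟨e, he⟩; exact ⟨e, fun x => congrArg f (he x)⟩)

def LPoset.overL {A : Type} (Γ : Set A) (u : LPoset A) : Prop := ∀ x, u.lab x ∈ Γ

/-- All labels of the pomset belong to `Γ`. -/
def Pomset.Over {A : Type} (Γ : Set A) : Pomset A → Prop :=
  Quotient.lift (LPoset.overL Γ) (by
    rintro u v ⟨e, he⟩
    refine propext ⟨fun h x => ?_, fun h x => ?_⟩
    · have h2 := he (e.symm x)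
      rw [OrderIso.apply_symm_apply] at h2
      rw [h2]; exact h _
    · rw [← he x]; exact h _)

/-- Series-parallel pomsets. -/
inductive Pomset.IsSP {A : Type} : Pomset A → Prop
  | empty : Pomset.IsSP (Pomset.empty A)
  | single (a : A) : Pomset.IsSP (Pomset.single a)
  | seq {U V : Pomset A} : Pomset.IsSP U → Pomset.IsSP V → Pomset.IsSP (Pomset.seq U V)
  | par {U V : Pomset A} : Pomset.IsSP U → Pomset.IsSP V → Pomset.IsSP (Pomset.par U V)

def SPset (A : Type) : Set (Pomset A) := {U | U.IsSP}

/-! ### Pomset contexts -/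

/-- Contexts are pomsets over `Option A`, where `none` plays the role of `*`.
`uniqueStarL` says there is exactly one `*`-labelled node. -/
def LPoset.uniqueStarL {A : Type} (c : LPoset (Option A)) : Prop := ∃! x, c.lab x = none

theorem LPoset.uniqueStarL_congr {A : Type} {u v : LPoset (Option A)}
    (e : u.carrier ≃o v.carrier) (he : ∀ x, v.lab (e x) = u.lab x) :
    u.uniqueStarL ↔ v.uniqueStarL := by
  constructor
  · rintro ⟨x, hx, hux⟩
    refine ⟨e x, show v.lab (e x) = none by rw [he]; exact hx, fun y hy => ?_⟩
    have h2 := he (e.symm y)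
    rw [OrderIso.apply_symm_apply] at h2
    have h3 : e.symm y = x := hux _ (h2.symm.trans hy)
    rw [← h3, OrderIso.apply_symm_apply]
  · rintro ⟨x, hx, hvx⟩
    refine ⟨e.symm x, ?_, fun y hy => ?_⟩
    · show u.lab (e.symm x) = none
      have h2 := he (e.symm x)
      rw [OrderIso.apply_symm_apply] at h2
      rw [← h2]; exact hx
    · have h3 : e y = x := hvx _ (show v.lab (e y) = none by rw [he]; exact hy)
      rw [← h3, OrderIso.symm_apply_apply]

/-- A pomset context: exactly one node labelled `*`. -/
def Pomset.IsCtx {A : Type} : Pomset (Option A) → Prop :=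
  Quotient.lift LPoset.uniqueStarL
    (fun _ _ h => propext (LPoset.uniqueStarL_congr h.choose h.choose_spec))

/-- Series-parallel pomset contexts. -/
def Pomset.IsSPCtx {A : Type} (C : Pomset (Option A)) : Prop := C.IsCtx ∧ C.IsSP

/-- Sequential (totally ordered) pomset contexts. -/
def Pomset.IsSeqCtx {A : Type} (C : Pomset (Option A)) : Prop := C.IsCtx ∧ C.IsWord

/-- The trivial context `*`. -/
def starCtx (A : Type) : Pomset (Option A) := Pomset.single (none : Option A)

theorem option_get_eq_get {α : Type} {o₁ o₂ : Option α} (h : o₁ = o₂) (h₁ : o₁.isSome)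
    (h₂ : o₂.isSome) : o₁.get h₁ = o₂.get h₂ := by subst h; rfl

/-- The order of `C[U]`: the orders of `C` (restricted away from `*`) and of `U`, with a
point of `C` below (resp. above) all of `U` when it is below (resp. above) the unique
`*`-node of `C`.  (For well-definedness of the order, the cross-relations are guarded by
the requirement that the star node is unique, which holds for every genuine context.) -/
def LPoset.insLe {A : Type} (c : LPoset (Option A)) (u : LPoset A) :
    ({x : c.carrier // c.lab x ≠ none} ⊕ u.carrier) →
    ({x : c.carrier // c.lab x ≠ none} ⊕ u.carrier) → Prop
  | Sum.inl x, Sum.inl y => x.val ≤ y.val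
  | Sum.inr x, Sum.inr y => x ≤ y
  | Sum.inl x, Sum.inr _ => c.uniqueStarL ∧ ∃ s, c.lab s = none ∧ x.val ≤ s
  | Sum.inr _, Sum.inl y => c.uniqueStarL ∧ ∃ s, c.lab s = none ∧ s ≤ y.val

/-- Insertion of a labelled poset `u` into the gap of a context `c`: the `*`-labelled
node is removed and `u` is put in its place, inheriting the order relations of `*`. -/
noncomputable def LPoset.insL {A : Type} (c : LPoset (Option A)) (u : LPoset A) :
    LPoset A where
  carrier := {x : c.carrier // c.lab x ≠ none} ⊕ u.carrier
  fin := by classical exact inferInstance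
  ord :=
    { le := LPoset.insLe c u
      lt := fun p q => LPoset.insLe c u p q ∧ ¬ LPoset.insLe c u q p
      lt_iff_le_not_ge := fun _ _ => Iff.rfl
      le_refl := by rintro (x | x) <;> exact le_refl _
      le_trans := by
        rintro (x | x) (y | y) (z | z) h1 h2
        · exact le_trans h1 h2
        · obtain ⟨hu, s, hs, hys⟩ := h2
          exact ⟨hu, s, hs, le_trans h1 hys⟩
        · obtain ⟨hu, s, hs, hxs⟩ := h1
          obtain ⟨-, t, ht, htz⟩ := h2
          obtain ⟨w, hw, huniq⟩ := hu
          have hst : s = t := (huniq s hs).trans (huniq t ht).symm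
          exact le_trans (hst ▸ hxs) htz
        · exact h1
        · obtain ⟨hu, s, hs, hsy⟩ := h1
          exact ⟨hu, s, hs, le_trans hsy h2⟩
        · obtain ⟨hu, s, hs, hsy⟩ := h1
          obtain ⟨-, t, ht, hyt⟩ := h2
          obtain ⟨w, hw, huniq⟩ := hu
          have hst : s = t := (huniq s hs).trans (huniq t ht).symm
          have hy : y.val = s := le_antisymm (hst.symm ▸ hyt) hsy
          exact absurd (hy.symm ▸ hs) y.prop
        · exact h2
        · exact le_trans h1 h2
      le_antisymm := by
        rintro (x | x) (y | y) h1 h2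
        · exact congrArg Sum.inl (Subtype.ext (le_antisymm h1 h2))
        · obtain ⟨hu, s, hs, hxs⟩ := h1
          obtain ⟨-, t, ht, htx⟩ := h2
          obtain ⟨w, hw, huniq⟩ := hu
          have hst : s = t := (huniq s hs).trans (huniq t ht).symm
          have hx : x.val = s := le_antisymm hxs (hst.symm ▸ htx)
          exact absurd (hx.symm ▸ hs) x.prop
        · obtain ⟨hu, s, hs, hsy⟩ := h1
          obtain ⟨-, t, ht, hyt⟩ := h2
          obtain ⟨w, hw, huniq⟩ := hu
          have hst : s = t := (huniq s hs).trans (huniq t ht).symm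
          have hy : y.val = s := le_antisymm (hst.symm ▸ hyt) hsy
          exact absurd (hy.symm ▸ hs) y.prop
        · exact congrArg Sum.inr (le_antisymm h1 h2) }
  lab := Sum.elim (fun x => (c.lab x.val).get (Option.isSome_iff_ne_none.mpr x.prop)) u.lab

/-- `Pomset.ins C U` is `C[U]`: plugging the pomset `U` into the gap of the context `C`. -/
noncomputable def Pomset.ins {A : Type} : Pomset (Option A) → Pomset A → Pomset A :=
  Quotient.map₂ LPoset.insL (by
    rintro c₁ c₂ ⟨e, he⟩ u₁ u₂ ⟨f, hf⟩
    have hstar : c₁.uniqueStarL ↔ c₂.uniqueStarL := LPoset.uniqueStarL_congr e he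
    refine ⟨{ toEquiv := Equiv.sumCongr
                (e.toEquiv.subtypeEquiv fun x => by
                  rw [show c₂.lab (e.toEquiv x) = c₁.lab x from he x]) f.toEquiv
              map_rel_iff' := ?_ }, ?_⟩
    · rintro (x | x) (y | y)
      · exact e.le_iff_le
      · show (c₂.uniqueStarL ∧ ∃ s, c₂.lab s = none ∧ (e x.val : c₂.carrier) ≤ s) ↔
             (c₁.uniqueStarL ∧ ∃ s, c₁.lab s = none ∧ x.val ≤ s)
        constructor
        · rintro ⟨hu, s, hs, hxs⟩
          refine ⟨hstar.mpr hu, e.symm s, ?_, ?_⟩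
          · have h2 := he (e.symm s)
            rw [OrderIso.apply_symm_apply] at h2
            rw [← h2]; exact hs
          · exact e.le_iff_le.mp (by rw [OrderIso.apply_symm_apply]; exact hxs)
        · rintro ⟨hu, s, hs, hxs⟩
          exact ⟨hstar.mp hu, e s, by rw [he]; exact hs, e.le_iff_le.mpr hxs⟩
      · show (c₂.uniqueStarL ∧ ∃ s, c₂.lab s = none ∧ s ≤ (e y.val : c₂.carrier)) ↔
             (c₁.uniqueStarL ∧ ∃ s, c₁.lab s = none ∧ s ≤ y.val)
        constructor
        · rintro ⟨hu, s, hs, hsy⟩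
          refine ⟨hstar.mpr hu, e.symm s, ?_, ?_⟩
          · have h2 := he (e.symm s)
            rw [OrderIso.apply_symm_apply] at h2
            rw [← h2]; exact hs
          · exact e.le_iff_le.mp (by rw [OrderIso.apply_symm_apply]; exact hsy)
        · rintro ⟨hu, s, hs, hsy⟩
          exact ⟨hstar.mp hu, e s, by rw [he]; exact hs, e.le_iff_le.mpr hsy⟩
      · exact f.le_iff_le
    · rintro (x | x)
      · exact option_get_eq_get (he x.val) _ _
      · exact hf x)

/-! ### Pomset languages -/

abbrev Lang (A : Type) := Set (Pomset A)

def Lang.seq {A : Type} (L K : Lang A) : Lang A :=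
  {W | ∃ U ∈ L, ∃ V ∈ K, W = Pomset.seq U V}

def Lang.par {A : Type} (L K : Lang A) : Lang A :=
  {W | ∃ U ∈ L, ∃ V ∈ K, W = Pomset.par U V}

def Lang.pow {A : Type} (L : Lang A) : ℕ → Lang A
  | 0 => {Pomset.empty A}
  | n + 1 => Lang.seq (Lang.pow L n) L

def Lang.star {A : Type} (L : Lang A) : Lang A := ⋃ n, L.pow n

/-- Application of a context to a language: `C[L] = {C[U] : U ∈ L}`. -/
def Ctx.img {A : Type} (C : Pomset (Option A)) (L : Lang A) : Lang A :=
  {W | ∃ U ∈ L, W = C.ins U}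

/-! ### CKA terms and semantics -/

inductive Term (A : Type) : Type
  | zero : Term A
  | one : Term A
  | var : A → Term A
  | add : Term A → Term A → Term A
  | seq : Term A → Term A → Term A
  | par : Term A → Term A → Term A
  | star : Term A → Term A

/-- Pomset language semantics of CKA terms. -/
def Term.lang {A : Type} : Term A → Lang A
  | .zero => ∅
  | .one => {Pomset.empty A}
  | .var a => {Pomset.single a}
  | .add e f => e.lang ∪ f.lang
  | .seq e f => Lang.seq e.lang f.lang
  | .par e f => Lang.par e.lang f.lang
  | .star e => Lang.star e.lang

/-- Sets of hypotheses: a hypothesis `e ≤ f` is the pair `(e, f)`. -/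
abbrev HypSet (A : Type) := Set (Term A × Term A)

/-- The congruence `≡^H` on CKA terms generated by the CKA axioms and the hypotheses `H`
(the constructor `hyp` encodes `e ≦^H f`, i.e. `e + f ≡^H f`, for `e ≤ f ∈ H`). -/
inductive CongH {A : Type} (H : HypSet A) : Term A → Term A → Prop
  | refl (e) : CongH H e e
  | symm {e f} : CongH H e f → CongH H f e
  | trans {e f g} : CongH H e f → CongH H f g → CongH H e g
  | addCong {e e' f f'} : CongH H e e' → CongH H f f' → CongH H (.add e f) (.add e' f')
  | seqCong {e e' f f'} : CongH H e e' → CongH H f f' → CongH H (.seq e f) (.seq e' f')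
  | parCong {e e' f f'} : CongH H e e' → CongH H f f' → CongH H (.par e f) (.par e' f')
  | starCong {e e'} : CongH H e e' → CongH H (.star e) (.star e')
  | addZero (e) : CongH H (.add e .zero) e
  | addIdem (e) : CongH H (.add e e) e
  | addComm (e f) : CongH H (.add e f) (.add f e)
  | addAssoc (e f g) : CongH H (.add e (.add f g)) (.add (.add e f) g)
  | seqAssoc (e f g) : CongH H (.seq e (.seq f g)) (.seq (.seq e f) g)
  | seqDistL (e f g) : CongH H (.seq e (.add f g)) (.add (.seq e f) (.seq e g))
  | seqDistR (e f g) : CongH H (.seq (.add e f) g) (.add (.seq e g) (.seq f g))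
  | seqOneR (e) : CongH H (.seq e .one) e
  | seqOneL (e) : CongH H (.seq .one e) e
  | seqZeroR (e) : CongH H (.seq e .zero) .zero
  | seqZeroL (e) : CongH H (.seq .zero e) .zero
  | parComm (e f) : CongH H (.par e f) (.par f e)
  | parOne (e) : CongH H (.par e .one) e
  | parZero (e) : CongH H (.par e .zero) .zero
  | parAssoc (e f g) : CongH H (.par e (.par f g)) (.par (.par e f) g)
  | parDist (e f g) : CongH H (.par e (.add f g)) (.add (.par e f) (.par e g))
  | starUnfoldL (e) : CongH H (.add .one (.seq e (.star e))) (.star e)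
  | starUnfoldR (e) : CongH H (.add .one (.seq (.star e) e)) (.star e)
  | lfpL {e f g} : CongH H (.add (.add e (.seq f g)) g) g →
      CongH H (.add (.seq (.star f) e) g) g
  | lfpR {e f g} : CongH H (.add (.add e (.seq f g)) f) f →
      CongH H (.add (.seq e (.star g)) f) f
  | hyp {e f} : (e, f) ∈ H → CongH H (.add e f) f

/-- `e ≦^H f`, the natural order `e + f ≡^H f`. -/
def LeH {A : Type} (H : HypSet A) (e f : Term A) : Prop := CongH H (.add e f) f

/-- The `H`-closure of a pomset language, as an inductive predicate: the smallest language
containing `L` such that for all `e ≤ f ∈ H` and series-parallel contexts `C`,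
if `C[⟦f⟧] ⊆ cl` then `C[⟦e⟧] ⊆ cl`. -/
inductive closure {A : Type} (H : HypSet A) (L : Lang A) : Pomset A → Prop
  | base {U} : U ∈ L → closure H L U
  | step {e f : Term A} (hef : (e, f) ∈ H) {C : Pomset (Option A)} (hC : C.IsSPCtx)
      (hf : ∀ V ∈ f.lang, closure H L (C.ins V)) {U} (hU : U ∈ e.lang) :
      closure H L (C.ins U)

/-- `cl H L` is the `H`-closure of `L`. -/
def cl {A : Type} (H : HypSet A) (L : Lang A) : Lang A := {U | closure H L U}

/-- The sequential closure: like `cl` but only sequential contexts are used. -/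
inductive seqClosure {A : Type} (H : HypSet A) (L : Lang A) : Pomset A → Prop
  | base {U} : U ∈ L → seqClosure H L U
  | step {e f : Term A} (hef : (e, f) ∈ H) {C : Pomset (Option A)} (hC : C.IsSeqCtx)
      (hf : ∀ V ∈ f.lang, seqClosure H L (C.ins V)) {U} (hU : U ∈ e.lang) :
      seqClosure H L (C.ins U)

def seqCl {A : Type} (H : HypSet A) (L : Lang A) : Lang A := {U | seqClosure H L U}

/-! ### Implication, completeness, reductions -/

/-- `H` implies `H'`: every hypothesis of `H'` is derivable from `H`. -/
def Implies {A : Type} (H H' : HypSet A) : Prop := ∀ p ∈ H', LeH H p.1 p.2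

/-- `H` is complete: semantic equivalence implies axiomatic equivalence. -/
def Complete {A : Type} (H : HypSet A) : Prop :=
  ∀ e f : Term A, cl H e.lang = cl H f.lang → CongH H e f

/-- A reduction from `H` to `H'` (presupposing that `H` implies `H'`). -/
structure IsReduction {A : Type} (H H' : HypSet A) (r : Term A → Term A) : Prop where
  implies : Implies H H'
  equiv : ∀ e, CongH H e (r e)
  reflect : ∀ e f : Term A, cl H e.lang = cl H f.lang → cl H' (r e).lang = cl H' (r f).lang

def Reduces {A : Type} (H H' : HypSet A) : Prop := ∃ r, IsReduction H H' r

/-- A strong reduction from `H` to `H'`. -/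
structure IsStrongReduction {A : Type} (H H' : HypSet A) (r : Term A → Term A)
    extends IsReduction H H' r : Prop where
  strong : ∀ e : Term A, cl H e.lang = cl H' (r e).lang

def StronglyReduces {A : Type} (H H' : HypSet A) : Prop := ∃ r, IsStrongReduction H H' r

/-- `H` factorises into `H₀` and `H₁`. -/
def Factorises {A : Type} (H H₀ H₁ : HypSet A) : Prop :=
  Implies H H₀ ∧ Implies H H₁ ∧ ∀ L : Lang A, L ⊆ SPset A → cl H L = cl H₁ (cl H₀ L)

/-! ### The exchange hypotheses and sp-subsumption -/

/-- The exchange hypotheses `(e∥f)·(g∥h) ≤ (e·g)∥(f·h)`. -/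
def exch (A : Type) : HypSet A :=
  {p | ∃ e f g h : Term A,
    p = (Term.seq (.par e f) (.par g h), Term.par (.seq e g) (.seq f h))}

/-- `⊑^sp`: the smallest precongruence on series-parallel pomsets satisfying the
exchange inequality. -/
inductive spSub {A : Type} : Pomset A → Pomset A → Prop
  | refl {U : Pomset A} : U.IsSP → spSub U U
  | trans {U V W} : spSub U V → spSub V W → spSub U W
  | seqCong {U V U' V'} : spSub U V → spSub U' V' → spSub (Pomset.seq U U') (Pomset.seq V V')
  | parCong {U V U' V'} : spSub U V → spSub U' V' → spSub (Pomset.par U U') (Pomset.par V V')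
  | exch {U V W X : Pomset A} : U.IsSP → V.IsSP → W.IsSP → X.IsSP →
      spSub (Pomset.seq (Pomset.par U V) (Pomset.par W X))
            (Pomset.par (Pomset.seq U W) (Pomset.seq V X))

/-! ### KA terms, grounded hypotheses, sequential reductions -/

/-- A term is a KA term when it contains no `∥`. -/
def Term.noPar {A : Type} : Term A → Prop
  | .zero => True
  | .one => True
  | .var _ => True
  | .add e f => e.noPar ∧ f.noPar
  | .seq e f => e.noPar ∧ f.noPar
  | .par _ _ => False
  | .star e => e.noPar

/-- A non-empty word. -/
def IsNonemptyWord {A : Type} (W : Pomset A) : Prop := W.IsWord ∧ W ≠ Pomset.empty A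

/-- A set of hypotheses is grounded when in each hypothesis `e ≤ f`, `e` is a KA term and
`⟦f⟧ = {W}` for a non-empty word `W`. -/
def Grounded {A : Type} (H : HypSet A) : Prop :=
  ∀ p ∈ H, p.1.noPar ∧ ∃ W : Pomset A, IsNonemptyWord W ∧ p.2.lang = {W}

/-- `≡_KA^H`: the congruence on terms generated by the axioms of `≡` not involving `∥`
together with the hypotheses of `H`. -/
inductive KACong {A : Type} (H : HypSet A) : Term A → Term A → Prop
  | refl (e) : KACong H e e
  | symm {e f} : KACong H e f → KACong H f e
  | trans {e f g} : KACong H e f → KACong H f g → KACong H e g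
  | addCong {e e' f f'} : KACong H e e' → KACong H f f' → KACong H (.add e f) (.add e' f')
  | seqCong {e e' f f'} : KACong H e e' → KACong H f f' → KACong H (.seq e f) (.seq e' f')
  | starCong {e e'} : KACong H e e' → KACong H (.star e) (.star e')
  | addZero (e) : KACong H (.add e .zero) e
  | addIdem (e) : KACong H (.add e e) e
  | addComm (e f) : KACong H (.add e f) (.add f e)
  | addAssoc (e f g) : KACong H (.add e (.add f g)) (.add (.add e f) g)
  | seqAssoc (e f g) : KACong H (.seq e (.seq f g)) (.seq (.seq e f) g)
  | seqDistL (e f g) : KACong H (.seq e (.add f g)) (.add (.seq e f) (.seq e g))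
  | seqDistR (e f g) : KACong H (.seq (.add e f) g) (.add (.seq e g) (.seq f g))
  | seqOneR (e) : KACong H (.seq e .one) e
  | seqOneL (e) : KACong H (.seq .one e) e
  | seqZeroR (e) : KACong H (.seq e .zero) .zero
  | seqZeroL (e) : KACong H (.seq .zero e) .zero
  | starUnfoldL (e) : KACong H (.add .one (.seq e (.star e))) (.star e)
  | starUnfoldR (e) : KACong H (.add .one (.seq (.star e) e)) (.star e)
  | lfpL {e f g} : KACong H (.add (.add e (.seq f g)) g) g →
      KACong H (.add (.seq (.star f) e) g) g
  | lfpR {e f g} : KACong H (.add (.add e (.seq f g)) f) f →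
      KACong H (.add (.seq e (.star g)) f) f
  | hyp {e f} : (e, f) ∈ H → KACong H (.add e f) f

/-- A sequential reduction from `H` to `H'`. -/
structure IsSeqReduction {A : Type} (H H' : HypSet A) (r : Term A → Term A) : Prop where
  implies : Implies H H'
  equiv : ∀ e : Term A, e.noPar → KACong H e (r e)
  closure_eq : ∀ e : Term A, e.noPar → seqCl H e.lang = seqCl H' (r e).lang

/-- Extension of a map on (KA) terms to all CKA terms, homomorphically on `∥`. -/
def parExt {A : Type} (r : Term A → Term A) : Term A → Term A
  | .par e f => .par (parExt r e) (parExt r f)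
  | e => r e

/-! ### Inductive characterisation of sp contexts -/

/-- The generators of series-parallel contexts (Lemma: `PC^sp` is the smallest such set). -/
inductive GenCtx {A : Type} : Pomset (Option A) → Prop
  | star : GenCtx (Pomset.single (none : Option A))
  | seqL {U : Pomset A} {C} : U.IsSP → GenCtx C → GenCtx (Pomset.seq (Pomset.map some U) C)
  | seqR {C} {V : Pomset A} : GenCtx C → V.IsSP → GenCtx (Pomset.seq C (Pomset.map some V))
  | par {U : Pomset A} {C} : U.IsSP → GenCtx C → GenCtx (Pomset.par (Pomset.map some U) C)

/-! ### Reification -/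

/-- Homomorphic extension of a letter map to terms. -/
def rTerm {A : Type} (r : A → Term A) : Term A → Term A
  | .zero => .zero
  | .one => .one
  | .var a => r a
  | .add e f => .add (rTerm r e) (rTerm r f)
  | .seq e f => .seq (rTerm r e) (rTerm r f)
  | .par e f => .par (rTerm r e) (rTerm r f)
  | .star e => .star (rTerm r e)

/-- All letters of a term lie in `Γ`. -/
def TermOver {A : Type} (Γ : Set A) : Term A → Prop
  | .zero => True
  | .one => True
  | .var a => a ∈ Γ
  | .add e f => TermOver Γ e ∧ TermOver Γ f
  | .seq e f => TermOver Γ e ∧ TermOver Γ f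
  | .par e f => TermOver Γ e ∧ TermOver Γ f
  | .star e => TermOver Γ e

/-- Extension of a letter map `r` to (series-parallel) pomsets, as a relation:
`rMap r U V` means `V ∈ r(U)`. -/
inductive rMap {A : Type} (r : A → Term A) : Pomset A → Pomset A → Prop
  | one : rMap r (Pomset.empty A) (Pomset.empty A)
  | var (a : A) {V} : V ∈ (r a).lang → rMap r (Pomset.single a) V
  | seq {U U' V V'} : rMap r U V → rMap r U' V' →
      rMap r (Pomset.seq U U') (Pomset.seq V V')
  | par {U U' V V'} : rMap r U V → rMap r U' V' →
      rMap r (Pomset.par U U') (Pomset.par V V')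

/-- Image of a language under (the pomset extension of) `r`. -/
def rImg {A : Type} (r : A → Term A) (L : Lang A) : Lang A := {V | ∃ U ∈ L, rMap r U V}

/-- Series-parallel pomsets over the subalphabet `Γ`. -/
def SPover {A : Type} (Γ : Set A) : Lang A := {U | U.IsSP ∧ U.Over Γ}

/-- `r : Σ → Term Γ` is a reification from `H` to `H'`. -/
structure IsReification {A : Type} (Γ : Set A) (H H' : HypSet A) (r : A → Term A) : Prop where
  toGamma : ∀ a : A, TermOver Γ (r a)
  equiv : ∀ a : A, CongH H (r a) (.var a)
  expansive : ∀ a ∈ Γ, LeH (∅ : HypSet A) (.var a) (r a)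
  preserves : ∀ L : Lang A, L ⊆ SPover Γ → cl H' L ⊆ SPover Γ
  hyps : ∀ p ∈ H, LeH H' (rTerm r p.1) (rTerm r p.2)

end CKAH

namespace CKAH

/-!
The language `K = cl H' (rImg r L)` is closed under `H'`: writing `X ≤ Y` when every series-parallel
context that sends `Y` into `K` sends `X` into `K`, one has `⟦e⟧ ≤ ⟦f⟧` for each hypothesis `e ≤ f`
of `H'`. Pomset languages with this preorder satisfy all the axioms and rules of CKA, so
`⟦r(e)⟧ ≤ ⟦r(f)⟧` for each `e ≤ f` in `H`. Moreover `⟦r(e)⟧ = r(⟦e⟧)`, and every member of `r(C[U])`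
is `G[U']` for some `U' ∈ r(U)` and a context `G` that maps `r(V)` into `r(C[V])` for every `V`.
Hence a closure step for `H` is carried by `r` into `K`.

Decomposing the members of `r(U · V)` and `r(C[U])` requires that `r` and `C[-]`, which are not
given by recursion on pomsets, respect the series-parallel structure. Both are instances of
substituting languages for letters in labelled posets, an operation that commutes with `·` and
`∥`.
-/

variable {A B : Type}

theorem LPoset.mk_eq_mk_of_surjective {u v : LPoset A} (g : u.carrier → v.carrier)
    (hle : ∀ x y, g x ≤ g y ↔ x ≤ y) (hg : Function.Surjective g)
    (hlab : ∀ x, v.lab (g x) = u.lab x) : (⟦u⟧ : Pomset A) = ⟦v⟧ :=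
  Quotient.sound ⟨RelIso.ofSurjective (OrderEmbedding.ofMapLEIff g hle) hg, hlab⟩

namespace Pomset

theorem seq_assoc (U V W : Pomset A) : (U.seq V).seq W = U.seq (V.seq W) := by
  induction U, V, W using Quotient.inductionOn₃ with | _ u v w
  refine Quotient.sound ⟨OrderIso.sumLexAssoc u.carrier v.carrier w.carrier, ?_⟩
  rintro ((x | x) | x) <;> rfl

theorem empty_seq (U : Pomset A) : (Pomset.empty A).seq U = U := by
  induction U using Quotient.inductionOn with | _ u
  refine Quotient.sound ⟨OrderIso.emptySumLex (α := u.carrier) (β := Fin 0), ?_⟩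
  rintro (x | x)
  · exact x.elim0
  · rfl

theorem seq_empty (U : Pomset A) : U.seq (Pomset.empty A) = U := by
  induction U using Quotient.inductionOn with | _ u
  refine Quotient.sound ⟨OrderIso.sumLexEmpty (α := u.carrier) (β := Fin 0), ?_⟩
  rintro (x | x)
  · rfl
  · exact x.elim0

theorem par_assoc (U V W : Pomset A) : (U.par V).par W = U.par (V.par W) := by
  induction U, V, W using Quotient.inductionOn₃ with | _ u v w
  refine Quotient.sound ⟨OrderIso.sumAssoc u.carrier v.carrier w.carrier, ?_⟩
  rintro ((x | x) | x) <;> rfl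

theorem par_comm (U V : Pomset A) : U.par V = V.par U := by
  induction U, V using Quotient.inductionOn₂ with | _ u v
  refine Quotient.sound ⟨OrderIso.sumComm u.carrier v.carrier, ?_⟩
  rintro (x | x) <;> rfl

theorem par_empty (U : Pomset A) : U.par (Pomset.empty A) = U := by
  induction U using Quotient.inductionOn with | _ u
  refine (LPoset.mk_eq_mk_of_surjective (v := u.parL (LPoset.emptyL A)) Sum.inl ?_ ?_ ?_).symm
  · exact fun _ _ => Sum.inl_le_inl_iff
  · rintro (x | x)
    · exact ⟨x, rfl⟩
    · exact x.elim0
  · exact fun _ => rfl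

end Pomset

/-! ### Substitution of pomset languages for letters -/

section SigmaLex

variable {ι κ : Type*} [PartialOrder ι] [PartialOrder κ]

theorem toLex_mk_le_toLex_mk_iff_of_eq {α : ι → Type*} [∀ i, PartialOrder (α i)] {i : ι}
    {a b : α i} : (toLex ⟨i, a⟩ : Σₗ i, α i) ≤ toLex ⟨i, b⟩ ↔ a ≤ b := by
  refine (Sigma.lex_iff (a := ⟨i, a⟩) (b := ⟨i, b⟩)).trans ?_
  simp

theorem toLex_mk_le_toLex_mk_iff_of_ne {α : ι → Type*} [∀ i, PartialOrder (α i)] {i j : ι}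
    (h : i ≠ j) {a : α i} {b : α j} : (toLex ⟨i, a⟩ : Σₗ i, α i) ≤ toLex ⟨j, b⟩ ↔ i ≤ j := by
  refine (Sigma.lex_iff (a := ⟨i, a⟩) (b := ⟨j, b⟩)).trans ?_
  simp [h, le_iff_lt_or_eq]

theorem toLex_mk_comp_le_toLex_mk_comp_iff {α : κ → Type*} [∀ k, PartialOrder (α k)] {e : ι → κ}
    (he : ∀ i j, e i ≤ e j ↔ i ≤ j) {i j : ι} {a : α (e i)} {b : α (e j)} :
    (toLex ⟨e i, a⟩ : Σₗ k, α k) ≤ toLex ⟨e j, b⟩ ↔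
      (toLex ⟨i, a⟩ : Σₗ i, α (e i)) ≤ toLex ⟨j, b⟩ := by
  have hinj : Function.Injective e := (OrderEmbedding.ofMapLEIff e he).injective
  rcases eq_or_ne i j with rfl | h
  · simp only [toLex_mk_le_toLex_mk_iff_of_eq]
  · rw [toLex_mk_le_toLex_mk_iff_of_ne h, toLex_mk_le_toLex_mk_iff_of_ne (hinj.ne h), he]

end SigmaLex

/-- The labelled poset obtained from `u` by replacing each point `x` by `f x`: the points of
distinct blocks are ordered as the points they replace. -/
def LPoset.substL (u : LPoset A) (f : u.carrier → LPoset B) : LPoset B where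
  carrier := Σₗ x, (f x).carrier
  fin := inferInstanceAs (Fintype (Σ x, (f x).carrier))
  ord := Sigma.Lex.partialOrder
  lab p := (f (ofLex p).1).lab (ofLex p).2

theorem LPoset.mk_substL_comp {u v : LPoset A} (e : u.carrier ≃o v.carrier)
    (f : v.carrier → LPoset B) : (⟦u.substL (f ∘ e)⟧ : Pomset B) = ⟦v.substL f⟧ := by
  refine mk_eq_mk_of_surjective (u := u.substL (f ∘ e)) (v := v.substL f)
    (fun p => toLex ⟨e (ofLex p).1, (ofLex p).2⟩) ?_ ?_ fun _ => rfl
  · exact fun _ _ => toLex_mk_comp_le_toLex_mk_comp_iff fun _ _ => e.le_iff_le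
  · rintro ⟨y, b⟩
    obtain ⟨x, rfl⟩ := e.surjective y
    exact ⟨toLex ⟨x, b⟩, rfl⟩

theorem LPoset.mk_substL_seqL (u v : LPoset A) (f : (u.seqL v).carrier → LPoset B) :
    (⟦(u.seqL v).substL f⟧ : Pomset B) =
      Pomset.seq ⟦u.substL fun x => f (Sum.inlₗ x)⟧ ⟦v.substL fun x => f (Sum.inrₗ x)⟧ := by
  refine (mk_eq_mk_of_surjective
    (u := (u.substL fun x => f (Sum.inlₗ x)).seqL (v.substL fun x => f (Sum.inrₗ x)))
    (v := (u.seqL v).substL f)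
    (fun p => (ofLex p).elim (fun p => toLex ⟨Sum.inlₗ (ofLex p).1, (ofLex p).2⟩)
      fun p => toLex ⟨Sum.inrₗ (ofLex p).1, (ofLex p).2⟩) ?_ ?_ ?_).symm
  · rintro (p | p) (q | q)
    · exact (toLex_mk_comp_le_toLex_mk_comp_iff fun _ _ => Sum.Lex.inl_le_inl_iff).trans
        Sum.Lex.inl_le_inl_iff.symm
    · exact (toLex_mk_le_toLex_mk_iff_of_ne (α := fun x => (f x).carrier) Sum.inl_ne_inr).trans
        (iff_of_true (Sum.Lex.inl_le_inr _ _) (Sum.Lex.inl_le_inr _ _))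
    · exact (toLex_mk_le_toLex_mk_iff_of_ne (α := fun x => (f x).carrier) Sum.inr_ne_inl).trans
        (iff_of_false Sum.Lex.not_inr_le_inl Sum.Lex.not_inr_le_inl)
    · exact (toLex_mk_comp_le_toLex_mk_comp_iff fun _ _ => Sum.Lex.inr_le_inr_iff).trans
        Sum.Lex.inr_le_inr_iff.symm
  · rintro ⟨x | x, a⟩
    · exact ⟨Sum.inlₗ (toLex ⟨x, a⟩), rfl⟩
    · exact ⟨Sum.inrₗ (toLex ⟨x, a⟩), rfl⟩
  · rintro (p | p) <;> rfl

theorem LPoset.mk_substL_parL (u v : LPoset A) (f : (u.parL v).carrier → LPoset B) :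
    (⟦(u.parL v).substL f⟧ : Pomset B) =
      Pomset.par ⟦u.substL fun x => f (Sum.inl x)⟧ ⟦v.substL fun x => f (Sum.inr x)⟧ := by
  refine (mk_eq_mk_of_surjective
    (u := (u.substL fun x => f (Sum.inl x)).parL (v.substL fun x => f (Sum.inr x)))
    (v := (u.parL v).substL f)
    (Sum.elim (fun p => toLex ⟨Sum.inl (ofLex p).1, (ofLex p).2⟩)
      fun p => toLex ⟨Sum.inr (ofLex p).1, (ofLex p).2⟩) ?_ ?_ ?_).symm
  · rintro (p | p) (q | q)
    · exact (toLex_mk_comp_le_toLex_mk_comp_iff fun _ _ => Sum.inl_le_inl_iff).trans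
        Sum.inl_le_inl_iff.symm
    · exact (toLex_mk_le_toLex_mk_iff_of_ne (α := fun x => (f x).carrier) Sum.inl_ne_inr).trans
        (iff_of_false Sum.not_inl_le_inr Sum.not_inl_le_inr)
    · exact (toLex_mk_le_toLex_mk_iff_of_ne (α := fun x => (f x).carrier) Sum.inr_ne_inl).trans
        (iff_of_false Sum.not_inr_le_inl Sum.not_inr_le_inl)
    · exact (toLex_mk_comp_le_toLex_mk_comp_iff fun _ _ => Sum.inr_le_inr_iff).trans
        Sum.inr_le_inr_iff.symm
  · rintro ⟨x | x, a⟩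
    · exact ⟨Sum.inl (toLex ⟨x, a⟩), rfl⟩
    · exact ⟨Sum.inr (toLex ⟨x, a⟩), rfl⟩
  · rintro (p | p) <;> rfl

/-- The language of a labelled poset under substitution of `K a` for every letter `a`; distinct
points with the same letter may be replaced by different members of `K a`. -/
def LPoset.substLang (K : A → Lang B) (u : LPoset A) : Lang B :=
  {W | ∃ f : u.carrier → LPoset B, (∀ x, ⟦f x⟧ ∈ K (u.lab x)) ∧ W = ⟦u.substL f⟧}

theorem LPoset.substLang_subset_of_iso (K : A → Lang B) {u v : LPoset A} (h : u.Iso v) :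
    v.substLang K ⊆ u.substLang K := by
  rintro _ ⟨f, hf, rfl⟩
  obtain ⟨e, he⟩ := h
  exact ⟨f ∘ e, fun x => he x ▸ hf (e x), (mk_substL_comp e f).symm⟩

namespace Pomset

/-- The homomorphic extension of `K : A → Lang B` to pomsets: each letter `a` is replaced by a
member of `K a`, chosen independently for every occurrence. -/
def subst (K : A → Lang B) : Pomset A → Lang B :=
  Quotient.lift (LPoset.substLang K) fun _ _ h =>
    (LPoset.substLang_subset_of_iso K ((LPoset.iso_equivalence A).symm h)).antisymm
      (LPoset.substLang_subset_of_iso K h)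

theorem subst_empty (K : A → Lang B) : (Pomset.empty A).subst K = {Pomset.empty B} := by
  have key (f : Fin 0 → LPoset B) :
      (⟦(LPoset.emptyL A).substL f⟧ : Pomset B) = Pomset.empty B :=
    LPoset.mk_eq_mk_of_surjective (fun p => (ofLex p).1) (fun p => (ofLex p).1.elim0)
      (fun y => y.elim0) (fun p => (ofLex p).1.elim0)
  refine Set.Subset.antisymm ?_ ?_
  · rintro _ ⟨f, -, rfl⟩
    exact key f
  · rintro _ rfl
    exact ⟨fun x => x.elim0, fun x => x.elim0, (key _).symm⟩

theorem subst_single (K : A → Lang B) (a : A) : (Pomset.single a).subst K = K a := by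
  have key (f : (LPoset.singleL a).carrier → LPoset B) :
      (⟦(LPoset.singleL a).substL f⟧ : Pomset B) = ⟦f PUnit.unit⟧ := by
    refine (LPoset.mk_eq_mk_of_surjective (v := (LPoset.singleL a).substL f)
      (fun x => toLex ⟨PUnit.unit, x⟩) ?_ ?_ fun _ => rfl).symm
    · exact fun _ _ => toLex_mk_le_toLex_mk_iff_of_eq (α := fun x => (f x).carrier)
    · rintro ⟨⟨⟩, x⟩
      exact ⟨x, rfl⟩
  refine Set.Subset.antisymm ?_ fun W hW => ?_
  · rintro _ ⟨f, hf, rfl⟩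
    exact (key f).symm ▸ hf PUnit.unit
  · induction W using Quotient.inductionOn with | _ w
    exact ⟨fun _ => w, fun _ => hW, (key fun _ => w).symm⟩

theorem subst_seq (K : A → Lang B) (U V : Pomset A) :
    (U.seq V).subst K = Lang.seq (U.subst K) (V.subst K) := by
  induction U, V using Quotient.inductionOn₂ with | _ u v
  refine Set.Subset.antisymm ?_ ?_
  · rintro _ ⟨f, hf, rfl⟩
    exact ⟨_, ⟨_, fun x => hf (Sum.inlₗ x), rfl⟩, _, ⟨_, fun x => hf (Sum.inrₗ x), rfl⟩,
      LPoset.mk_substL_seqL u v f⟩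
  · rintro _ ⟨_, ⟨f, hf, rfl⟩, _, ⟨g, hg, rfl⟩, rfl⟩
    refine ⟨fun x => Sum.elim f g (ofLex x), ?_,
      (LPoset.mk_substL_seqL u v fun x => Sum.elim f g (ofLex x)).symm⟩
    rintro (x | x)
    · exact hf x
    · exact hg x

theorem subst_par (K : A → Lang B) (U V : Pomset A) :
    (U.par V).subst K = Lang.par (U.subst K) (V.subst K) := by
  induction U, V using Quotient.inductionOn₂ with | _ u v
  refine Set.Subset.antisymm ?_ ?_
  · rintro _ ⟨f, hf, rfl⟩
    exact ⟨_, ⟨_, fun x => hf (Sum.inl x), rfl⟩, _, ⟨_, fun x => hf (Sum.inr x), rfl⟩,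
      LPoset.mk_substL_parL u v f⟩
  · rintro _ ⟨_, ⟨f, hf, rfl⟩, _, ⟨g, hg, rfl⟩, rfl⟩
    refine ⟨Sum.elim f g, ?_, (LPoset.mk_substL_parL u v (Sum.elim f g)).symm⟩
    rintro (x | x)
    · exact hf x
    · exact hg x

end Pomset

/-! ### The algebra of pomset languages -/

namespace Lang

theorem seq_eq_image2 (L M : Lang A) : L.seq M = Set.image2 Pomset.seq L M :=
  Set.ext fun _ => by simp only [seq, Set.mem_ofPred_eq, Set.mem_image2, eq_comm]

theorem par_eq_image2 (L M : Lang A) : L.par M = Set.image2 Pomset.par L M :=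
  Set.ext fun _ => by simp only [par, Set.mem_ofPred_eq, Set.mem_image2, eq_comm]

theorem seq_singleton (U V : Pomset A) : Lang.seq {U} {V} = {U.seq V} := by
  rw [seq_eq_image2, Set.image2_singleton]

theorem par_singleton (U V : Pomset A) : Lang.par {U} {V} = {U.par V} := by
  rw [par_eq_image2, Set.image2_singleton]

variable (L M N : Lang A)

theorem seq_assoc : (L.seq M).seq N = L.seq (M.seq N) := by
  simp only [seq_eq_image2, Set.image2_assoc Pomset.seq_assoc]

theorem one_seq : Lang.seq {Pomset.empty A} L = L := by
  rw [seq_eq_image2, Set.image2_left_identity Pomset.empty_seq]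

theorem seq_one : L.seq {Pomset.empty A} = L := by
  rw [seq_eq_image2, Set.image2_right_identity Pomset.seq_empty]

theorem seq_union : L.seq (M ∪ N) = L.seq M ∪ L.seq N := by
  simp only [seq_eq_image2, Set.image2_union_right]

theorem union_seq : Lang.seq (L ∪ M) N = L.seq N ∪ M.seq N := by
  simp only [seq_eq_image2, Set.image2_union_left]

theorem seq_zero : L.seq ∅ = ∅ := by
  rw [seq_eq_image2, Set.image2_empty_right]

theorem zero_seq : Lang.seq ∅ L = ∅ := by
  rw [seq_eq_image2, Set.image2_empty_left]

theorem seq_iUnion {ι : Type*} (M : ι → Lang A) : L.seq (⋃ i, M i) = ⋃ i, L.seq (M i) := by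
  simp only [seq_eq_image2, Set.image2_iUnion_right]

theorem iUnion_seq {ι : Type*} (L : ι → Lang A) : Lang.seq (⋃ i, L i) M = ⋃ i, (L i).seq M := by
  simp only [seq_eq_image2, Set.image2_iUnion_left]

theorem par_assoc : (L.par M).par N = L.par (M.par N) := by
  simp only [par_eq_image2, Set.image2_assoc Pomset.par_assoc]

theorem par_comm : L.par M = M.par L := by
  simp only [par_eq_image2, Set.image2_comm Pomset.par_comm]

theorem par_one : L.par {Pomset.empty A} = L := by
  rw [par_eq_image2, Set.image2_right_identity Pomset.par_empty]

theorem par_union : L.par (M ∪ N) = L.par M ∪ L.par N := by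
  simp only [par_eq_image2, Set.image2_union_right]

theorem par_zero : L.par ∅ = ∅ := by
  rw [par_eq_image2, Set.image2_empty_right]

theorem pow_succ_left (n : ℕ) : L.pow (n + 1) = L.seq (L.pow n) := by
  induction n with
  | zero => exact (one_seq L).trans (seq_one L).symm
  | succ n ih => exact (congrArg (seq · L) ih).trans (seq_assoc L (L.pow n) L)

theorem one_union_seq_star : {Pomset.empty A} ∪ L.seq L.star = L.star := by
  simp only [star, seq_iUnion, ← pow_succ_left]
  exact Set.union_iUnion_nat_succ L.pow

theorem one_union_star_seq : {Pomset.empty A} ∪ L.star.seq L = L.star := by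
  simp only [star, iUnion_seq]
  exact Set.union_iUnion_nat_succ L.pow

variable {L M}

theorem seq_subset_SPset (hL : L ⊆ SPset A) (hM : M ⊆ SPset A) : L.seq M ⊆ SPset A := by
  rintro _ ⟨U, hU, V, hV, rfl⟩
  exact (hL hU).seq (hM hV)

theorem par_subset_SPset (hL : L ⊆ SPset A) (hM : M ⊆ SPset A) : L.par M ⊆ SPset A := by
  rintro _ ⟨U, hU, V, hV, rfl⟩
  exact (hL hU).par (hM hV)

theorem pow_subset_SPset (hL : L ⊆ SPset A) (n : ℕ) : L.pow n ⊆ SPset A := by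
  induction n with
  | zero => exact Set.singleton_subset_iff.mpr .empty
  | succ n ih => exact seq_subset_SPset ih hL

end Lang

theorem Term.lang_subset_SPset (e : Term A) : e.lang ⊆ SPset A := by
  induction e with
  | zero => exact Set.empty_subset _
  | one => exact Set.singleton_subset_iff.mpr .empty
  | var a => exact Set.singleton_subset_iff.mpr (.single a)
  | add e f ihe ihf => exact Set.union_subset ihe ihf
  | seq e f ihe ihf => exact Lang.seq_subset_SPset ihe ihf
  | par e f ihe ihf => exact Lang.par_subset_SPset ihe ihf
  | star e ih => exact Set.iUnion_subset (Lang.pow_subset_SPset ih)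

/-! ### Series-parallel contexts -/

theorem LPoset.exists_unique_point_of_mk_eq_single {u : LPoset A} {a : A}
    (h : ⟦u⟧ = Pomset.single a) : ∃ p, (∀ q, q = p) ∧ u.lab p = a := by
  obtain ⟨e, he⟩ := Quotient.exact h.symm
  exact ⟨e PUnit.unit, fun q => (e.apply_symm_apply q).symm, he PUnit.unit⟩

theorem LPoset.mk_substL_eq_mk_insL {c : LPoset (Option A)} (hc : c.uniqueStarL) (u : LPoset A)
    {f : c.carrier → LPoset A}
    (hf : ∀ x, (⟦f x⟧ : Pomset A) = (c.lab x).elim ⟦u⟧ Pomset.single) :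
    (⟦c.substL f⟧ : Pomset A) = ⟦c.insL u⟧ := by
  have ⟨s, hs, hs_unique⟩ := hc
  obtain ⟨e, he⟩ : u.Iso (f s) :=
    Quotient.exact ((hf s).trans (by rw [hs]; rfl)).symm
  have hletter (x : {x // c.lab x ≠ none}) :
      ⟦f x.val⟧ = Pomset.single ((c.lab x.val).get (Option.isSome_iff_ne_none.mpr x.prop)) := by
    obtain ⟨a, ha⟩ := Option.ne_none_iff_exists'.mp x.prop
    simp only [hf x.val, ha, Option.get_some]
    rfl
  choose p hp hlab using fun x => exists_unique_point_of_mk_eq_single (hletter x)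
  have hne (x : {x // c.lab x ≠ none}) : x.val ≠ s := fun h => x.prop (h ▸ hs)
  refine (mk_eq_mk_of_surjective (u := c.insL u) (v := c.substL f)
    (Sum.elim (fun x => toLex ⟨x.val, p x⟩) fun y => toLex ⟨s, e y⟩) ?_ ?_ ?_).symm
  · rintro (x | x) (y | y)
    · by_cases hxy : x = y
      · subst hxy
        exact (toLex_mk_le_toLex_mk_iff_of_eq (α := fun x => (f x).carrier)).trans
          (iff_of_true le_rfl (le_refl x.val))
      · exact toLex_mk_le_toLex_mk_iff_of_ne (α := fun x => (f x).carrier)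
          (Subtype.coe_ne_coe.mpr hxy)
    · refine (toLex_mk_le_toLex_mk_iff_of_ne (α := fun x => (f x).carrier) (hne x)).trans ?_
      exact ⟨fun h => ⟨hc, s, hs, h⟩, fun ⟨_, t, ht, h⟩ => hs_unique t ht ▸ h⟩
    · refine (toLex_mk_le_toLex_mk_iff_of_ne (α := fun x => (f x).carrier) (hne y).symm).trans ?_
      exact ⟨fun h => ⟨hc, s, hs, h⟩, fun ⟨_, t, ht, h⟩ => hs_unique t ht ▸ h⟩
    · exact (toLex_mk_le_toLex_mk_iff_of_eq (α := fun x => (f x).carrier)).trans e.le_iff_le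
  · rintro ⟨x, q⟩
    by_cases hx : c.lab x = none
    · obtain rfl := hs_unique x hx
      exact ⟨Sum.inr (e.symm q), congrArg (Sigma.mk x) (e.apply_symm_apply q)⟩
    · exact ⟨Sum.inl ⟨x, hx⟩, congrArg (Sigma.mk x) (hp ⟨x, hx⟩ q).symm⟩
  · rintro (x | y)
    · exact hlab x
    · exact he y

namespace Pomset

theorem subst_map {C : Type} (g : A → B) (K : B → Lang C) (U : Pomset A) :
    (U.map g).subst K = U.subst (K ∘ g) := by
  induction U using Quotient.inductionOn with | _ u
  rfl

theorem IsSP.subst_single_eq {U : Pomset A} (hU : U.IsSP) :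
    U.subst (fun a => {Pomset.single a}) = {U} := by
  induction hU with
  | empty => exact subst_empty _
  | single a => exact subst_single _ a
  | seq _ _ ihU ihV => rw [subst_seq, ihU, ihV, Lang.seq_singleton]
  | par _ _ ihU ihV => rw [subst_par, ihU, ihV, Lang.par_singleton]

/-- The substitution of `X` for the gap `*` that fixes all other letters; on contexts it computes
`C[X]`, see `Pomset.IsCtx.subst_plug`. -/
def plug (X : Pomset A) (o : Option A) : Lang A := {o.elim X Pomset.single}

theorem IsCtx.subst_plug {C : Pomset (Option A)} (hC : C.IsCtx) (X : Pomset A) :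
    C.subst (plug X) = {C.ins X} := by
  induction C, X using Quotient.inductionOn₂ with | _ c u
  refine Set.eq_singleton_iff_nonempty_unique_mem.mpr ⟨?_, ?_⟩
  · exact ⟨_, fun x => ((c.lab x).elim ⟦u⟧ Pomset.single).out, fun x => Quotient.out_eq _, rfl⟩
  · rintro _ ⟨f, hf, rfl⟩
    exact LPoset.mk_substL_eq_mk_insL hC u hf

theorem IsSP.map_some_subst_plug {U : Pomset A} (hU : U.IsSP) (X : Pomset A) :
    (U.map some).subst (plug X) = {U} := by
  rw [subst_map]
  exact hU.subst_single_eq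

theorem map_seq (g : A → B) (U V : Pomset A) : (U.seq V).map g = (U.map g).seq (V.map g) := by
  induction U, V using Quotient.inductionOn₂ with | _ u v
  refine Quotient.sound ⟨OrderIso.refl _, ?_⟩
  rintro (x | x) <;> rfl

theorem map_par (g : A → B) (U V : Pomset A) : (U.par V).map g = (U.map g).par (V.map g) := by
  induction U, V using Quotient.inductionOn₂ with | _ u v
  refine Quotient.sound ⟨OrderIso.refl _, ?_⟩
  rintro (x | x) <;> rfl

theorem map_empty (g : A → B) : (Pomset.empty A).map g = Pomset.empty B :=
  Quotient.sound ⟨OrderIso.refl _, fun x => x.elim0⟩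

theorem IsSP.map {U : Pomset A} (hU : U.IsSP) (g : A → B) : (U.map g).IsSP := by
  induction hU with
  | empty => exact map_empty g ▸ .empty
  | single a => exact .single (g a)
  | seq _ _ ihU ihV => exact map_seq g _ _ ▸ ihU.seq ihV
  | par _ _ ihU ihV => exact map_par g _ _ ▸ ihU.par ihV

end Pomset

/-- The number of points of a labelled poset carrying the gap label `*`. -/
noncomputable def LPoset.starCountL (u : LPoset (Option A)) : ℕ :=
  Nat.card {x // u.lab x = none}

namespace Pomset

/-- The number of gaps `*` of a pomset. -/
noncomputable def starCount : Pomset (Option A) → ℕ :=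
  Quotient.lift LPoset.starCountL fun _ _ ⟨e, he⟩ =>
    Nat.card_congr (e.toEquiv.subtypeEquiv fun x => (he x).symm ▸ Iff.rfl)

theorem isCtx_iff_starCount_eq_one {C : Pomset (Option A)} : C.IsCtx ↔ C.starCount = 1 := by
  induction C using Quotient.inductionOn with | _ c
  change (∃! x, c.lab x = none) ↔ Nat.card {x // c.lab x = none} = 1
  rw [Nat.card_eq_one_iff_exists]
  simp [ExistsUnique]

theorem starCount_empty : (Pomset.empty (Option A)).starCount = 0 :=
  Nat.card_eq_zero.mpr (Or.inl ⟨fun x => x.val.elim0⟩)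

theorem starCount_single_none : (Pomset.single (none : Option A)).starCount = 1 :=
  isCtx_iff_starCount_eq_one.mp ⟨PUnit.unit, rfl, fun _ _ => rfl⟩

theorem starCount_single_some (a : A) : (Pomset.single (some a)).starCount = 0 :=
  Nat.card_eq_zero.mpr (Or.inl ⟨fun x => Option.some_ne_none a x.prop⟩)

theorem starCount_seq (C D : Pomset (Option A)) :
    (C.seq D).starCount = C.starCount + D.starCount := by
  induction C, D using Quotient.inductionOn₂ with | _ c d
  change Nat.card {x : c.carrier ⊕ d.carrier // Sum.elim c.lab d.lab x = none} = _
  rw [Nat.card_congr Equiv.subtypeSum, Nat.card_sum]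
  rfl

theorem starCount_par (C D : Pomset (Option A)) :
    (C.par D).starCount = C.starCount + D.starCount := by
  induction C, D using Quotient.inductionOn₂ with | _ c d
  change Nat.card {x : c.carrier ⊕ d.carrier // Sum.elim c.lab d.lab x = none} = _
  rw [Nat.card_congr Equiv.subtypeSum, Nat.card_sum]
  rfl

theorem starCount_map_some (U : Pomset A) : (U.map some).starCount = 0 := by
  induction U using Quotient.inductionOn with | _ u
  exact Nat.card_eq_zero.mpr (Or.inl ⟨fun x => Option.some_ne_none _ x.prop⟩)

theorem IsSP.exists_map_some_eq {C : Pomset (Option A)} (hC : C.IsSP) (h : C.starCount = 0) :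
    ∃ U : Pomset A, U.IsSP ∧ U.map some = C := by
  induction hC with
  | empty => exact ⟨_, .empty, map_empty some⟩
  | single o =>
    cases o with
    | none => exact absurd (starCount_single_none.symm.trans h) one_ne_zero
    | some a => exact ⟨_, .single a, rfl⟩
  | seq _ _ ihC ihD =>
    rw [starCount_seq, Nat.add_eq_zero_iff] at h
    obtain ⟨U, hU, rfl⟩ := ihC h.1
    obtain ⟨V, hV, rfl⟩ := ihD h.2
    exact ⟨_, hU.seq hV, map_seq some U V⟩
  | par _ _ ihC ihD =>
    rw [starCount_par, Nat.add_eq_zero_iff] at h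
    obtain ⟨U, hU, rfl⟩ := ihC h.1
    obtain ⟨V, hV, rfl⟩ := ihD h.2
    exact ⟨_, hU.par hV, map_par some U V⟩

theorem IsSPCtx.genCtx {C : Pomset (Option A)} (hC : C.IsSPCtx) : GenCtx C := by
  obtain ⟨hctx, hsp⟩ := hC
  rw [isCtx_iff_starCount_eq_one] at hctx
  induction hsp with
  | empty => exact absurd (starCount_empty.symm.trans hctx) zero_ne_one
  | single o =>
    cases o with
    | none => exact .star
    | some a => exact absurd ((starCount_single_some a).symm.trans hctx) zero_ne_one
  | seq hC hD ihC ihD =>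
    rw [starCount_seq, Nat.add_eq_one_iff] at hctx
    rcases hctx with ⟨h0, h1⟩ | ⟨h1, h0⟩
    · obtain ⟨U, hU, rfl⟩ := hC.exists_map_some_eq h0
      exact .seqL hU (ihD h1)
    · obtain ⟨V, hV, rfl⟩ := hD.exists_map_some_eq h0
      exact .seqR (ihC h1) hV
  | par hC hD ihC ihD =>
    rw [starCount_par, Nat.add_eq_one_iff] at hctx
    rcases hctx with ⟨h0, h1⟩ | ⟨h1, h0⟩
    · obtain ⟨U, hU, rfl⟩ := hC.exists_map_some_eq h0
      exact .par hU (ihD h1)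
    · obtain ⟨V, hV, rfl⟩ := hD.exists_map_some_eq h0
      exact par_comm _ _ ▸ .par hV (ihC h1)

end Pomset

theorem GenCtx.isSPCtx {C : Pomset (Option A)} (hC : GenCtx C) : C.IsSPCtx := by
  simp only [Pomset.IsSPCtx, Pomset.isCtx_iff_starCount_eq_one]
  induction hC with
  | star => exact ⟨Pomset.starCount_single_none, .single none⟩
  | seqL hU _ ih =>
    exact ⟨by rw [Pomset.starCount_seq, Pomset.starCount_map_some, ih.1], (hU.map some).seq ih.2⟩
  | seqR _ hV ih =>
    exact ⟨by rw [Pomset.starCount_seq, Pomset.starCount_map_some, ih.1], ih.2.seq (hV.map some)⟩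
  | par hU _ ih =>
    exact ⟨by rw [Pomset.starCount_par, Pomset.starCount_map_some, ih.1], (hU.map some).par ih.2⟩

namespace Pomset

theorem ins_single_none (X : Pomset A) : (Pomset.single none).ins X = X := by
  have h := GenCtx.star.isSPCtx.1.subst_plug X
  rw [subst_single] at h
  exact (Set.singleton_injective h).symm

variable {U : Pomset A} {C : Pomset (Option A)}

theorem ins_map_some_seq (hU : U.IsSP) (hC : GenCtx C) (X : Pomset A) :
    ((U.map some).seq C).ins X = U.seq (C.ins X) := by
  have h := (GenCtx.seqL hU hC).isSPCtx.1.subst_plug X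
  rw [subst_seq, hU.map_some_subst_plug, hC.isSPCtx.1.subst_plug, Lang.seq_singleton] at h
  exact (Set.singleton_injective h).symm

theorem ins_seq_map_some (hC : GenCtx C) (hU : U.IsSP) (X : Pomset A) :
    (C.seq (U.map some)).ins X = (C.ins X).seq U := by
  have h := (GenCtx.seqR hC hU).isSPCtx.1.subst_plug X
  rw [subst_seq, hU.map_some_subst_plug, hC.isSPCtx.1.subst_plug, Lang.seq_singleton] at h
  exact (Set.singleton_injective h).symm

theorem ins_map_some_par (hU : U.IsSP) (hC : GenCtx C) (X : Pomset A) :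
    ((U.map some).par C).ins X = U.par (C.ins X) := by
  have h := (GenCtx.par hU hC).isSPCtx.1.subst_plug X
  rw [subst_par, hU.map_some_subst_plug, hC.isSPCtx.1.subst_plug, Lang.par_singleton] at h
  exact (Set.singleton_injective h).symm

end Pomset

/-- The maps `X ↦ C[X]` of series-parallel contexts `C`, generated inductively so that they
compose; see `isContextMap_iff`. -/
inductive IsContextMap : (Pomset A → Pomset A) → Prop
  | id : IsContextMap id
  | seqLeft {U : Pomset A} {F} : U.IsSP → IsContextMap F → IsContextMap fun X => U.seq (F X)
  | seqRight {F} {V : Pomset A} : IsContextMap F → V.IsSP → IsContextMap fun X => (F X).seq V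
  | par {U : Pomset A} {F} : U.IsSP → IsContextMap F → IsContextMap fun X => U.par (F X)

theorem GenCtx.isContextMap {C : Pomset (Option A)} (hC : GenCtx C) : IsContextMap C.ins := by
  induction hC with
  | star => exact (funext Pomset.ins_single_none : _ = id) ▸ .id
  | seqL hU hC ih => exact funext (Pomset.ins_map_some_seq hU hC) ▸ .seqLeft hU ih
  | seqR hC hV ih => exact funext (Pomset.ins_seq_map_some hC hV) ▸ .seqRight ih hV
  | par hU hC ih => exact funext (Pomset.ins_map_some_par hU hC) ▸ .par hU ih

theorem isContextMap_iff {F : Pomset A → Pomset A} :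
    IsContextMap F ↔ ∃ C : Pomset (Option A), C.IsSPCtx ∧ C.ins = F := by
  refine ⟨fun hF => ?_, ?_⟩
  · suffices ∃ C, GenCtx C ∧ C.ins = F from this.imp fun _ h => ⟨h.1.isSPCtx, h.2⟩
    induction hF with
    | id => exact ⟨_, .star, funext Pomset.ins_single_none⟩
    | seqLeft hU _ ih =>
      obtain ⟨C, hC, rfl⟩ := ih
      exact ⟨_, .seqL hU hC, funext (Pomset.ins_map_some_seq hU hC)⟩
    | seqRight _ hV ih =>
      obtain ⟨C, hC, rfl⟩ := ih
      exact ⟨_, .seqR hC hV, funext (Pomset.ins_seq_map_some hC hV)⟩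
    | par hU _ ih =>
      obtain ⟨C, hC, rfl⟩ := ih
      exact ⟨_, .par hU hC, funext (Pomset.ins_map_some_par hU hC)⟩
  · rintro ⟨C, hC, rfl⟩
    exact hC.genCtx.isContextMap

namespace IsContextMap

variable {F G : Pomset A → Pomset A}

theorem comp (hF : IsContextMap F) (hG : IsContextMap G) : IsContextMap (F ∘ G) := by
  induction hF with
  | id => exact hG
  | seqLeft hU _ ih => exact .seqLeft hU ih
  | seqRight _ hV ih => exact .seqRight ih hV
  | par hU _ ih => exact .par hU ih

theorem isSP {X : Pomset A} (hF : IsContextMap F) (hX : X.IsSP) : (F X).IsSP := by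
  induction hF with
  | id => exact hX
  | seqLeft hU _ ih => exact hU.seq ih
  | seqRight _ hV ih => exact ih.seq hV
  | par hU _ ih => exact hU.par ih

end IsContextMap

/-! ### The image of a language under a letter map -/

section rMap

variable {r : A → Term A} {U V W : Pomset A}

theorem rMap.isSP_right (h : rMap r U W) : W.IsSP := by
  induction h with
  | one => exact .empty
  | var a hV => exact (r a).lang_subset_SPset hV
  | seq _ _ ih ih' => exact ih.seq ih'
  | par _ _ ih ih' => exact ih.par ih'

theorem rMap.mem_subst (h : rMap r U W) : W ∈ U.subst fun a => (r a).lang := by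
  induction h with
  | one => exact Pomset.subst_empty _ ▸ rfl
  | var a hV => exact Pomset.subst_single _ a ▸ hV
  | seq _ _ ih ih' => exact Pomset.subst_seq _ _ _ ▸ ⟨_, ih, _, ih', rfl⟩
  | par _ _ ih ih' => exact Pomset.subst_par _ _ _ ▸ ⟨_, ih, _, ih', rfl⟩

theorem Pomset.IsSP.rMap_iff_mem_subst (hU : U.IsSP) :
    rMap r U W ↔ W ∈ U.subst fun a => (r a).lang := by
  refine ⟨rMap.mem_subst, fun h => ?_⟩
  induction hU generalizing W with
  | empty =>
    rw [subst_empty] at h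
    obtain rfl : W = Pomset.empty A := h
    exact .one
  | single a =>
    rw [subst_single] at h
    exact .var a h
  | seq _ _ ihU ihV =>
    rw [subst_seq] at h
    obtain ⟨_, hU', _, hV', rfl⟩ := h
    exact (ihU hU').seq (ihV hV')
  | par _ _ ihU ihV =>
    rw [subst_par] at h
    obtain ⟨_, hU', _, hV', rfl⟩ := h
    exact (ihU hU').par (ihV hV')

theorem rMap_empty_iff : rMap r (Pomset.empty A) W ↔ W = Pomset.empty A := by
  rw [Pomset.IsSP.empty.rMap_iff_mem_subst, Pomset.subst_empty, Set.mem_singleton_iff]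

theorem rMap_single_iff {a : A} : rMap r (Pomset.single a) W ↔ W ∈ (r a).lang := by
  rw [(Pomset.IsSP.single a).rMap_iff_mem_subst, Pomset.subst_single]

theorem rMap_seq_iff (hU : U.IsSP) (hV : V.IsSP) :
    rMap r (U.seq V) W ↔ ∃ U', rMap r U U' ∧ ∃ V', rMap r V V' ∧ W = U'.seq V' := by
  simp only [hU.rMap_iff_mem_subst, hV.rMap_iff_mem_subst, (hU.seq hV).rMap_iff_mem_subst,
    Pomset.subst_seq, Lang.seq, Set.mem_ofPred_eq]

theorem rMap_par_iff (hU : U.IsSP) (hV : V.IsSP) :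
    rMap r (U.par V) W ↔ ∃ U', rMap r U U' ∧ ∃ V', rMap r V V' ∧ W = U'.par V' := by
  simp only [hU.rMap_iff_mem_subst, hV.rMap_iff_mem_subst, (hU.par hV).rMap_iff_mem_subst,
    Pomset.subst_par, Lang.par, Set.mem_ofPred_eq]

theorem IsContextMap.exists_rMap {F : Pomset A → Pomset A} {X : Pomset A} (hF : IsContextMap F)
    (hX : X.IsSP) (h : rMap r (F X) W) :
    ∃ G X', IsContextMap G ∧ rMap r X X' ∧ W = G X' ∧
      ∀ Y Y', rMap r Y Y' → rMap r (F Y) (G Y') := by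
  induction hF generalizing W with
  | id => exact ⟨_, W, .id, h, rfl, fun _ _ h => h⟩
  | seqLeft hU hF ih =>
    obtain ⟨U', hUU', _, h', rfl⟩ := (rMap_seq_iff hU (hF.isSP hX)).mp h
    obtain ⟨G, X', hG, hXX', rfl, hFG⟩ := ih h'
    exact ⟨_, X', .seqLeft hUU'.isSP_right hG, hXX', rfl, fun _ _ hY => hUU'.seq (hFG _ _ hY)⟩
  | seqRight hF hV ih =>
    obtain ⟨_, h', V', hVV', rfl⟩ := (rMap_seq_iff (hF.isSP hX) hV).mp h
    obtain ⟨G, X', hG, hXX', rfl, hFG⟩ := ih h'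
    exact ⟨_, X', .seqRight hG hVV'.isSP_right, hXX', rfl, fun _ _ hY => (hFG _ _ hY).seq hVV'⟩
  | par hU hF ih =>
    obtain ⟨U', hUU', _, h', rfl⟩ := (rMap_par_iff hU (hF.isSP hX)).mp h
    obtain ⟨G, X', hG, hXX', rfl, hFG⟩ := ih h'
    exact ⟨_, X', .par hUU'.isSP_right hG, hXX', rfl, fun _ _ hY => hUU'.par (hFG _ _ hY)⟩

end rMap

section rImg

variable {r : A → Term A} {L M : Lang A}

theorem rImg_singleton_empty : rImg r {Pomset.empty A} = {Pomset.empty A} := by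
  ext W
  simp [rImg, rMap_empty_iff]

theorem rImg_singleton_single (a : A) : rImg r {Pomset.single a} = (r a).lang := by
  ext W
  simp [rImg, rMap_single_iff]

theorem rImg_union : rImg r (L ∪ M) = rImg r L ∪ rImg r M := by
  ext W
  simp only [rImg, Set.mem_union, Set.mem_ofPred_eq, or_and_right, exists_or]

theorem rImg_iUnion {ι : Type*} (L : ι → Lang A) : rImg r (⋃ i, L i) = ⋃ i, rImg r (L i) := by
  ext W
  simp only [rImg, Set.mem_iUnion, Set.mem_ofPred_eq, ← exists_and_right]
  exact exists_comm

theorem rImg_seq (hL : L ⊆ SPset A) (hM : M ⊆ SPset A) :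
    rImg r (L.seq M) = (rImg r L).seq (rImg r M) := by
  ext W
  constructor
  · rintro ⟨_, ⟨U, hU, V, hV, rfl⟩, h⟩
    obtain ⟨U', hUU', V', hVV', rfl⟩ := (rMap_seq_iff (hL hU) (hM hV)).mp h
    exact ⟨U', ⟨U, hU, hUU'⟩, V', ⟨V, hV, hVV'⟩, rfl⟩
  · rintro ⟨U', ⟨U, hU, hUU'⟩, V', ⟨V, hV, hVV'⟩, rfl⟩
    exact ⟨_, ⟨U, hU, V, hV, rfl⟩, hUU'.seq hVV'⟩

theorem rImg_par (hL : L ⊆ SPset A) (hM : M ⊆ SPset A) :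
    rImg r (L.par M) = (rImg r L).par (rImg r M) := by
  ext W
  constructor
  · rintro ⟨_, ⟨U, hU, V, hV, rfl⟩, h⟩
    obtain ⟨U', hUU', V', hVV', rfl⟩ := (rMap_par_iff (hL hU) (hM hV)).mp h
    exact ⟨U', ⟨U, hU, hUU'⟩, V', ⟨V, hV, hVV'⟩, rfl⟩
  · rintro ⟨U', ⟨U, hU, hUU'⟩, V', ⟨V, hV, hVV'⟩, rfl⟩
    exact ⟨_, ⟨U, hU, V, hV, rfl⟩, hUU'.par hVV'⟩

theorem rImg_pow (hL : L ⊆ SPset A) (n : ℕ) : rImg r (L.pow n) = (rImg r L).pow n := by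
  induction n with
  | zero => exact rImg_singleton_empty
  | succ n ih => rw [Lang.pow, rImg_seq (Lang.pow_subset_SPset hL n) hL, ih, Lang.pow]

theorem lang_rTerm (r : A → Term A) (e : Term A) : (rTerm r e).lang = rImg r e.lang := by
  induction e with
  | zero => simp [rTerm, Term.lang, rImg]
  | one => exact rImg_singleton_empty.symm
  | var a => exact (rImg_singleton_single a).symm
  | add e f ihe ihf => rw [rTerm, Term.lang, Term.lang, ihe, ihf, rImg_union]
  | seq e f ihe ihf =>
    rw [rTerm, Term.lang, Term.lang, ihe, ihf, rImg_seq e.lang_subset_SPset f.lang_subset_SPset]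
  | par e f ihe ihf =>
    rw [rTerm, Term.lang, Term.lang, ihe, ihf, rImg_par e.lang_subset_SPset f.lang_subset_SPset]
  | star e ih =>
    rw [rTerm, Term.lang, Term.lang, ih, Lang.star, Lang.star, rImg_iUnion]
    simp only [rImg_pow e.lang_subset_SPset]

end rImg

/-! ### Soundness of provable inequations -/

/-- Inequality of `L` and `M` as far as membership in `K` can tell: every series-parallel context
that sends `M` into `K` sends `L` into `K`. -/
def ContextLE (K L M : Lang A) : Prop :=
  ∀ F, IsContextMap F → Set.MapsTo F M K → Set.MapsTo F L K

namespace ContextLE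

variable {K L L' M M' N : Lang A}

theorem refl (L : Lang A) : ContextLE K L L := fun _ _ h => h

theorem trans (hLM : ContextLE K L M) (hMN : ContextLE K M N) : ContextLE K L N :=
  fun F hF h => hLM F hF (hMN F hF h)

instance : IsPreorder (Lang A) (ContextLE K) where
  refl := .refl
  trans _ _ _ := .trans

theorem of_subset (h : L ⊆ M) : ContextLE K L M := fun _ _ hM => hM.mono_left h

theorem union_le (hL : ContextLE K L N) (hM : ContextLE K M N) : ContextLE K (L ∪ M) N :=
  fun F hF h => (hL F hF h).union (hM F hF h)

theorem iUnion_le {ι : Type*} {L : ι → Lang A} (h : ∀ i, ContextLE K (L i) M) :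
    ContextLE K (⋃ i, L i) M :=
  fun F hF hM => Set.mapsTo_iUnion.mpr fun i => h i F hF hM

theorem union_mono (hL : ContextLE K L L') (hM : ContextLE K M M') :
    ContextLE K (L ∪ M) (L' ∪ M') :=
  union_le (hL.trans (of_subset Set.subset_union_left))
    (hM.trans (of_subset Set.subset_union_right))

theorem seq_mono_left (hM : M ⊆ SPset A) (h : ContextLE K L L') :
    ContextLE K (L.seq M) (L'.seq M) := by
  rintro F hF hK _ ⟨U, hU, V, hV, rfl⟩
  exact h _ (hF.comp (.seqRight .id (hM hV))) (fun U' hU' => hK ⟨U', hU', V, hV, rfl⟩) hU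

theorem seq_mono_right (hL : L ⊆ SPset A) (h : ContextLE K M M') :
    ContextLE K (L.seq M) (L.seq M') := by
  rintro F hF hK _ ⟨U, hU, V, hV, rfl⟩
  exact h _ (hF.comp (.seqLeft (hL hU) .id)) (fun V' hV' => hK ⟨U, hU, V', hV', rfl⟩) hV

theorem par_mono_right (hL : L ⊆ SPset A) (h : ContextLE K M M') :
    ContextLE K (L.par M) (L.par M') := by
  rintro F hF hK _ ⟨U, hU, V, hV, rfl⟩
  exact h _ (hF.comp (.par (hL hU) .id)) (fun V' hV' => hK ⟨U, hU, V', hV', rfl⟩) hV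

theorem seq_mono (hL' : L' ⊆ SPset A) (hM : M ⊆ SPset A) (hL : ContextLE K L L')
    (hMM' : ContextLE K M M') : ContextLE K (L.seq M) (L'.seq M') :=
  (seq_mono_left hM hL).trans (seq_mono_right hL' hMM')

theorem par_mono (hL' : L' ⊆ SPset A) (hM : M ⊆ SPset A) (hL : ContextLE K L L')
    (hMM' : ContextLE K M M') : ContextLE K (L.par M) (L'.par M') := by
  refine .trans ?_ (par_mono_right hL' hMM')
  rw [Lang.par_comm L, Lang.par_comm L']
  exact par_mono_right hM hL

theorem pow_mono (hL : L ⊆ SPset A) (hL' : L' ⊆ SPset A) (h : ContextLE K L L') (n : ℕ) :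
    ContextLE K (L.pow n) (L'.pow n) := by
  induction n with
  | zero => exact .refl _
  | succ n ih => exact seq_mono (Lang.pow_subset_SPset hL' n) hL ih h

theorem star_mono (hL : L ⊆ SPset A) (hL' : L' ⊆ SPset A) (h : ContextLE K L L') :
    ContextLE K L.star L'.star :=
  iUnion_le fun n => (pow_mono hL hL' h n).trans (of_subset (Set.subset_iUnion L'.pow n))

theorem star_seq_le (hM : M ⊆ SPset A) (h : ContextLE K (L ∪ M.seq N) N) :
    ContextLE K (M.star.seq L) N := by
  rw [Lang.star, Lang.iUnion_seq]
  refine iUnion_le fun n => ?_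
  induction n with
  | zero =>
    rw [Lang.pow, Lang.one_seq]
    exact (of_subset Set.subset_union_left).trans h
  | succ n ih =>
    rw [Lang.pow_succ_left, Lang.seq_assoc]
    exact (seq_mono_right hM ih).trans ((of_subset Set.subset_union_right).trans h)

theorem seq_star_le (hM : M ⊆ SPset A) (h : ContextLE K (L ∪ N.seq M) N) :
    ContextLE K (L.seq M.star) N := by
  rw [Lang.star, Lang.seq_iUnion]
  refine iUnion_le fun n => ?_
  induction n with
  | zero =>
    rw [Lang.pow, Lang.seq_one]
    exact (of_subset Set.subset_union_left).trans h
  | succ n ih =>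
    rw [Lang.pow, ← Lang.seq_assoc]
    exact (seq_mono_left hM ih).trans ((of_subset Set.subset_union_right).trans h)

theorem antisymmRel_union_iff : AntisymmRel (ContextLE K) (L ∪ M) M ↔ ContextLE K L M :=
  ⟨fun h => (of_subset Set.subset_union_left).trans h.1,
    fun h => ⟨union_le h (.refl M), of_subset Set.subset_union_right⟩⟩

end ContextLE

theorem CongH.antisymmRel_contextLE {H : HypSet A} {K : Lang A}
    (hK : ∀ p ∈ H, ContextLE K p.1.lang p.2.lang) {e f : Term A} (h : CongH H e f) :
    AntisymmRel (ContextLE K) e.lang f.lang := by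
  have sp := Term.lang_subset_SPset (A := A)
  induction h with
  | refl e => exact .rfl
  | symm _ ih => exact ih.symm
  | trans _ _ ih ih' => exact ih.trans ih'
  | addCong _ _ ih ih' => exact ⟨.union_mono ih.1 ih'.1, .union_mono ih.2 ih'.2⟩
  | seqCong _ _ ih ih' =>
    exact ⟨.seq_mono (sp _) (sp _) ih.1 ih'.1, .seq_mono (sp _) (sp _) ih.2 ih'.2⟩
  | parCong _ _ ih ih' =>
    exact ⟨.par_mono (sp _) (sp _) ih.1 ih'.1, .par_mono (sp _) (sp _) ih.2 ih'.2⟩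
  | starCong _ ih => exact ⟨.star_mono (sp _) (sp _) ih.1, .star_mono (sp _) (sp _) ih.2⟩
  | addZero e => exact .of_eq (Set.union_empty _)
  | addIdem e => exact .of_eq (Set.union_self _)
  | addComm e f => exact .of_eq (Set.union_comm _ _)
  | addAssoc e f g => exact .of_eq (Set.union_assoc _ _ _).symm
  | seqAssoc e f g => exact .of_eq (Lang.seq_assoc _ _ _).symm
  | seqDistL e f g => exact .of_eq (Lang.seq_union _ _ _)
  | seqDistR e f g => exact .of_eq (Lang.union_seq _ _ _)
  | seqOneR e => exact .of_eq (Lang.seq_one _)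
  | seqOneL e => exact .of_eq (Lang.one_seq _)
  | seqZeroR e => exact .of_eq (Lang.seq_zero _)
  | seqZeroL e => exact .of_eq (Lang.zero_seq _)
  | parComm e f => exact .of_eq (Lang.par_comm _ _)
  | parOne e => exact .of_eq (Lang.par_one _)
  | parZero e => exact .of_eq (Lang.par_zero _)
  | parAssoc e f g => exact .of_eq (Lang.par_assoc _ _ _).symm
  | parDist e f g => exact .of_eq (Lang.par_union _ _ _)
  | starUnfoldL e => exact .of_eq (Lang.one_union_seq_star _)
  | starUnfoldR e => exact .of_eq (Lang.one_union_star_seq _)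
  | lfpL _ ih =>
    exact ContextLE.antisymmRel_union_iff.mpr
      (.star_seq_le (sp _) (ContextLE.antisymmRel_union_iff.mp ih))
  | lfpR _ ih =>
    exact ContextLE.antisymmRel_union_iff.mpr
      (.seq_star_le (sp _) (ContextLE.antisymmRel_union_iff.mp ih))
  | hyp h => exact ContextLE.antisymmRel_union_iff.mpr (hK _ h)

theorem LeH.contextLE {H : HypSet A} {K : Lang A} (hK : ∀ p ∈ H, ContextLE K p.1.lang p.2.lang)
    {e f : Term A} (h : LeH H e f) : ContextLE K e.lang f.lang :=
  ContextLE.antisymmRel_union_iff.mp (CongH.antisymmRel_contextLE hK h)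

theorem contextLE_cl_of_mem {H : HypSet A} {p : Term A × Term A} (hp : p ∈ H) (L : Lang A) :
    ContextLE (cl H L) p.1.lang p.2.lang := by
  intro F hF hK U hU
  obtain ⟨C, hC, rfl⟩ := isContextMap_iff.mp hF
  exact closure.step hp hC hK hU

theorem reification_closure_general {H H' : HypSet A} {r : A → Term A}
    (hr : ∀ p ∈ H, LeH H' (rTerm r p.1) (rTerm r p.2)) (L : Lang A) :
    rImg r (cl H L) ⊆ cl H' (rImg r L) := by
  rintro W ⟨X, (hX : closure H L X), hW⟩
  induction hX generalizing W with
  | base hX => exact closure.base ⟨_, hX, hW⟩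
  | @step e f hef C hC _ U hU ih =>
    obtain ⟨G, U', hG, hUU', rfl, hlift⟩ :=
      hC.genCtx.isContextMap.exists_rMap (e.lang_subset_SPset hU) hW
    have hle : ContextLE (cl H' (rImg r L)) (rImg r e.lang) (rImg r f.lang) := by
      simpa only [lang_rTerm] using LeH.contextLE (fun p hp => contextLE_cl_of_mem hp _) (hr _ hef)
    refine hle G hG ?_ ⟨U, hU, hUU'⟩
    rintro V' ⟨V, hV, hVV'⟩
    exact ih V hV (hlift V V' hVV')

/-- If `r` is a reification from `H` to `H'` and `L ⊆ SP(Σ)`, then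
`r(cl_H(L)) ⊆ cl_{H'}(r(L))`. -/
theorem reification_closure (A : Type) (Γ : Set A) (H H' : HypSet A)
    (r : A → Term A) (hr : IsReification Γ H H' r)
    (L : Lang A) (hL : L ⊆ SPset A) :
    rImg r (cl H L) ⊆ cl H' (rImg r L) :=
  reification_closure_general hr.hyps L

end CKAH
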